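/- arXiv:1506.07420 — 2 statements merged into one kernel-verified Lean document; each statement's English description precedes it below -/
import Mathlib

section
/- There is the following coercivity estimate: if w : ℝ → ℝ is differentiable with w and w' square integrable on ℝ, and ∫_ℝ w(x)·Y₀(x) dx = 0 where Y₀(x) = (1/2)·sech²(x/√2), then ∫_ℝ w'(x)² dx + 2·∫_ℝ w(x)² dx - 3·∫_ℝ sech²(x/√2)·w(x)² dx ≥ (3/7)·( ∫_ℝ w'(x)² dx + ∫_ℝ w(x)² dx ). -/
open MeasureTheory

noncomputable def sech (x : ℝ) : ℝ := 1 / Real.cosh x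

noncomputable def Y0 (x : ℝ) : ℝ := (1 / 2) * sech (x / Real.sqrt 2) ^ 2

/-!
Let `A = d/dx + W` with `W = √2 tanh (x / √2)`, so that `A Y₀ = 0` and `L = A*A`. A function
`w ⟂ Y₀` lies in the range of `A* = -d/dx + W`: the solution `v = -V / Y₀`, `V' = Y₀ w`, of
`A* v = w` vanishes at infinity. Hence bounding `A*A` below by `c` on `Y₀^⊥` amounts to bounding the
partner `AA* = -d²/dx² + W² + W'` below by `c`. With `B = d/dx + U`, `U = tanh (x / √2) / √2`,
the partner equals `B*B + 3/2`, so `c = 3/2`. To avoid operator theory and any regularity of `w`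
beyond a first derivative, both factorizations are expressed by completing squares:
`⟨Lw, w⟩ - c‖w‖² = ‖Aw - cv‖² + c‖Bv‖²`, up to a boundary term at infinity, which vanishes.

The gap `3/2` is the estimate `⟨Lw, w⟩ ≥ (3/2)‖w‖²`. As the potential satisfies
`2 - 3 sech² ≥ -1`, also `⟨Lw, w⟩ ≥ ‖w'‖² - ‖w‖²`, and `4/7` of the former plus `3/7` of the latter
is the coercivity estimate.
-/

open Filter Set Topology

section IntegralsOnTheLine

lemma sub_le_integral_of_hasDerivAt_le {f g g' : ℝ → ℝ} {a b : ℝ}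
    (hg : ∀ x, HasDerivAt g (g' x) x) (hf : Integrable f) (hle : ∀ x, g' x ≤ f x)
    (hbot : Tendsto g atBot (𝓝 a)) (htop : Tendsto g atTop (𝓝 b)) :
    b - a ≤ ∫ x, f x := by
  have hsub : Tendsto (fun r ↦ g r - g (-r)) atTop (𝓝 (b - a)) :=
    htop.sub (hbot.comp tendsto_neg_atTop_atBot)
  refine le_of_tendsto_of_tendsto hsub
    (intervalIntegral_tendsto_integral hf tendsto_neg_atTop_atBot tendsto_id) ?_
  filter_upwards [eventually_ge_atTop 0] with r hr
  exact intervalIntegral.sub_le_integral_of_hasDeriv_right_of_le (neg_le_self hr)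
    (fun x _ ↦ (hg x).continuousAt.continuousWithinAt) (fun x _ ↦ (hg x).hasDerivWithinAt)
    hf.integrableOn fun x _ ↦ hle x

lemma exists_hasDerivAt_tendsto_zero_of_integral_eq_zero {E : Type*} [NormedAddCommGroup E]
    [NormedSpace ℝ E] [CompleteSpace E] {g : ℝ → E} (hcont : Continuous g) (hg : Integrable g)
    (hzero : ∫ x, g x = 0) :
    ∃ V : ℝ → E, (∀ x, HasDerivAt V (g x) x) ∧ Tendsto V (cocompact ℝ) (𝓝 0) := by
  refine ⟨fun x ↦ ∫ t in Iic x, g t, fun x ↦ ?_, ?_⟩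
  · have hsplit (y : ℝ) : (∫ t in Iic 0, g t) + ∫ t in 0..y, g t = ∫ t in Iic y, g t := by
      rw [← intervalIntegral.integral_Iic_sub_Iic hg.integrableOn hg.integrableOn,
        add_sub_cancel]
    simpa only [hsplit] using (intervalIntegral.integral_hasDerivAt_right
      (hcont.intervalIntegrable 0 x) (hcont.stronglyMeasurableAtFilter _ _)
      hcont.continuousAt).const_add (∫ t in Iic 0, g t)
  · have htail (x : ℝ) : ∫ t in Iic x, g t = -∫ t in Ioi x, g t := by
      rw [eq_neg_iff_add_eq_zero,
        intervalIntegral.integral_Iic_add_Ioi hg.integrableOn hg.integrableOn, hzero]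
    rw [cocompact_eq_atBot_atTop]
    refine (tendsto_integral_Iic_zero tendsto_id).sup ?_
    simpa only [htail, id, neg_zero] using
      (tendsto_integral_Ioi_zero (f := g) (μ := volume) tendsto_id).neg

lemma aestronglyMeasurable_of_hasDerivAt {f f' : ℝ → ℝ} (hf : ∀ x, HasDerivAt f (f' x) x) :
    AEStronglyMeasurable f' := by
  rw [← funext fun x ↦ (hf x).deriv]
  exact (measurable_deriv f).aestronglyMeasurable

lemma tendsto_zero_of_memLp_two_deriv {w w' : ℝ → ℝ} (hw : ∀ x, HasDerivAt w (w' x) x)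
    (hw2 : MemLp w 2) (hw'2 : MemLp w' 2) : Tendsto w (cocompact ℝ) (𝓝 0) := by
  have hderiv (x : ℝ) : HasDerivAt (fun x ↦ w x ^ 2) (2 * (w x * w' x)) x :=
    ((hw x).fun_pow 2).congr_deriv (by ring)
  have hint : Integrable fun x ↦ 2 * (w x * w' x) := (hw2.integrable_mul hw'2).const_mul 2
  have hsq : Tendsto (fun x ↦ w x ^ 2) (cocompact ℝ) (𝓝 0) := by
    rw [cocompact_eq_atBot_atTop]
    exact (tendsto_zero_of_hasDerivAt_of_integrableOn_Iic (a := 0) (fun x _ ↦ hderiv x)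
        hint.integrableOn hw2.integrable_sq.integrableOn).sup
      (tendsto_zero_of_hasDerivAt_of_integrableOn_Ioi (a := 0) (fun x _ ↦ hderiv x)
        hint.integrableOn hw2.integrable_sq.integrableOn)
  rw [tendsto_zero_iff_abs_tendsto_zero]
  simpa only [Function.comp_def, Real.sqrt_sq_eq_abs, Real.sqrt_zero] using hsq.sqrt

lemma lhopital_zero_cocompact {f f' g g' : ℝ → ℝ} {l : Filter ℝ}
    (hf : ∀ᶠ x in cocompact ℝ, HasDerivAt f (f' x) x)
    (hg : ∀ᶠ x in cocompact ℝ, HasDerivAt g (g' x) x)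
    (hg' : ∀ᶠ x in cocompact ℝ, g' x ≠ 0) (hf0 : Tendsto f (cocompact ℝ) (𝓝 0))
    (hg0 : Tendsto g (cocompact ℝ) (𝓝 0))
    (hdiv : Tendsto (fun x ↦ f' x / g' x) (cocompact ℝ) l) :
    Tendsto (fun x ↦ f x / g x) (cocompact ℝ) l := by
  simp only [cocompact_eq_atBot_atTop, eventually_sup, tendsto_sup] at *
  exact ⟨HasDerivAt.lhopital_zero_atBot hf.1 hg.1 hg'.1 hf0.1 hg0.1 hdiv.1,
    HasDerivAt.lhopital_zero_atTop hf.2 hg.2 hg'.2 hf0.2 hg0.2 hdiv.2⟩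

end IntegralsOnTheLine

section SpectralGap

/-- `φ` is a ground state with superpotential `W`: a positive square-integrable zero mode of the
first-order operator `d/dx + W`, and hence of `-d²/dx² + W² - W'`. The superpotential is bounded,
and bounded away from zero near infinity, so that `φ` decays exponentially. -/
structure IsGroundState (W φ : ℝ → ℝ) : Prop where
  pos : ∀ x, 0 < φ x
  hasDerivAt : ∀ x, HasDerivAt φ (-(W x * φ x)) x
  memLp_two : MemLp φ 2
  bounded : ∃ C, ∀ x, |W x| ≤ C
  bounded_below : ∃ δ > 0, ∀ᶠ x in cocompact ℝ, δ ≤ |W x|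

variable {W φ w w' : ℝ → ℝ}

lemma IsGroundState.tendsto_zero (hφ : IsGroundState W φ) : Tendsto φ (cocompact ℝ) (𝓝 0) := by
  obtain ⟨C, hC⟩ := hφ.bounded
  have hφ'2 : MemLp (fun x ↦ -(W x * φ x)) 2 := by
    refine hφ.memLp_two.of_le_mul (aestronglyMeasurable_of_hasDerivAt hφ.hasDerivAt)
      (.of_forall fun x ↦ ?_) (c := C)
    rw [norm_neg, norm_mul]
    exact mul_le_mul_of_nonneg_right (hC x) (norm_nonneg _)
  exact tendsto_zero_of_memLp_two_deriv hφ.hasDerivAt hφ.memLp_two hφ'2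

lemma IsGroundState.exists_adjoint_eq (hφ : IsGroundState W φ) (hw : Continuous w)
    (hw2 : MemLp w 2) (hw0 : Tendsto w (cocompact ℝ) (𝓝 0)) (horth : ∫ x, φ x * w x = 0) :
    ∃ v : ℝ → ℝ, (∀ x, HasDerivAt v (W x * v x - w x) x) ∧ Tendsto v (cocompact ℝ) (𝓝 0) := by
  have hφcont : Continuous φ := continuous_iff_continuousAt.2 fun x ↦ (hφ.hasDerivAt x).continuousAt
  obtain ⟨V, hV, hV0⟩ := exists_hasDerivAt_tendsto_zero_of_integral_eq_zero (hφcont.mul hw)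
    (hφ.memLp_two.integrable_mul hw2) horth
  obtain ⟨δ, hδ, hWδ⟩ := hφ.bounded_below
  have hWne : ∀ᶠ x in cocompact ℝ, W x ≠ 0 :=
    hWδ.mono fun x hx ↦ abs_pos.1 (hδ.trans_le hx)
  have hdiv : Tendsto (fun x ↦ φ x * w x / -(W x * φ x)) (cocompact ℝ) (𝓝 0) := by
    have hbound : Tendsto (fun x ↦ |w x| / δ) (cocompact ℝ) (𝓝 0) := by
      simpa using hw0.abs.div_const δ
    refine squeeze_zero_norm' ?_ hbound
    filter_upwards [hWδ] with x hx
    rw [div_neg, norm_neg, mul_comm (W x), mul_div_mul_left _ _ (hφ.pos x).ne', norm_div]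
    exact div_le_div_of_nonneg_left (norm_nonneg _) hδ hx
  have hquot : Tendsto (fun x ↦ V x / φ x) (cocompact ℝ) (𝓝 0) :=
    lhopital_zero_cocompact (.of_forall hV) (.of_forall hφ.hasDerivAt)
      (hWne.mono fun x hx ↦ neg_ne_zero.2 (mul_ne_zero hx (hφ.pos x).ne')) hV0 hφ.tendsto_zero hdiv
  refine ⟨fun x ↦ -(V x / φ x), fun x ↦ ?_, by simpa using hquot.neg⟩
  have hφx := (hφ.pos x).ne'
  refine ((hV x).fun_div (hφ.hasDerivAt x) hφx).fun_neg.congr_deriv ?_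
  rw [Pi.mul_apply]
  field_simp
  ring

lemma hasDerivAt_gap_boundary_term {W' U U' v : ℝ → ℝ} {x : ℝ} (c : ℝ)
    (hW : HasDerivAt W (W' x) x) (hU : HasDerivAt U (U' x) x) (hw : HasDerivAt w (w' x) x)
    (hv : HasDerivAt v (W x * v x - w x) x) :
    HasDerivAt (fun x ↦ 2 * c * (w x * v x) - c * ((W x + U x) * v x ^ 2) - W x * w x ^ 2)
      (w' x ^ 2 + (W x ^ 2 - W' x - c) * w x ^ 2
        - ((w' x + W x * w x - c * v x) ^ 2 + c * (W x * v x - w x + U x * v x) ^ 2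
          + c * (W x ^ 2 + W' x - (U x ^ 2 - U' x + c)) * v x ^ 2)) x := by
  refine ((((hw.fun_mul hv).const_mul (2 * c)).fun_sub
    (((hW.fun_add hU).fun_mul (hv.fun_pow 2)).const_mul c)).fun_sub
      (hW.fun_mul (hw.fun_pow 2))).congr_deriv ?_
  push_cast
  ring

lemma tendsto_bdd_mul_sq_zero {f g : ℝ → ℝ} {l : Filter ℝ} {C : ℝ} (hf : ∀ x, |f x| ≤ C)
    (hg : Tendsto g l (𝓝 0)) : Tendsto (fun x ↦ f x * g x ^ 2) l (𝓝 0) :=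
  isBoundedUnder_le_mul_tendsto_zero (isBoundedUnder_of ⟨C, hf⟩) (by simpa using hg.pow 2)

theorem IsGroundState.mul_integral_sq_le {W' U U' : ℝ → ℝ} {c : ℝ} (hφ : IsGroundState W φ)
    (hW : ∀ x, HasDerivAt W (W' x) x) (hU : ∀ x, HasDerivAt U (U' x) x)
    (hW'bdd : ∃ C, ∀ x, |W' x| ≤ C) (hUbdd : ∃ C, ∀ x, |U x| ≤ C) (hc : 0 ≤ c)
    (hpartner : ∀ x, U x ^ 2 - U' x + c ≤ W x ^ 2 + W' x)
    (hw : ∀ x, HasDerivAt w (w' x) x) (hw2 : MemLp w 2) (hw'2 : MemLp w' 2)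
    (horth : ∫ x, φ x * w x = 0) :
    c * ∫ x, w x ^ 2 ≤ ∫ x, (w' x ^ 2 + (W x ^ 2 - W' x) * w x ^ 2) := by
  have hw0 := tendsto_zero_of_memLp_two_deriv hw hw2 hw'2
  obtain ⟨v, hv, hv0⟩ := hφ.exists_adjoint_eq
    (continuous_iff_continuousAt.2 fun x ↦ (hw x).continuousAt) hw2 hw0 horth
  obtain ⟨CW, hCW⟩ := hφ.bounded
  obtain ⟨CW', hCW'⟩ := hW'bdd
  obtain ⟨CU, hCU⟩ := hUbdd
  have hboundary : Tendsto (fun x ↦ 2 * c * (w x * v x) - c * ((W x + U x) * v x ^ 2)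
      - W x * w x ^ 2) (cocompact ℝ) (𝓝 0) := by
    have hWU (x : ℝ) : |W x + U x| ≤ CW + CU :=
      (abs_add_le _ _).trans (add_le_add (hCW x) (hCU x))
    have hwv := (hw0.mul hv0).const_mul (2 * c)
    have hv2 := (tendsto_bdd_mul_sq_zero hWU hv0).const_mul c
    simpa using (hwv.sub hv2).sub (tendsto_bdd_mul_sq_zero hCW hw0)
  have henergy : Integrable fun x ↦ w' x ^ 2 + (W x ^ 2 - W' x) * w x ^ 2 := by
    refine hw'2.integrable_sq.add (hw2.integrable_sq.bdd_mul (c := CW ^ 2 + CW') ?_ ?_)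
    · exact ((continuous_iff_continuousAt.2 fun x ↦ (hW x).continuousAt).pow 2
        ).aestronglyMeasurable.sub (aestronglyMeasurable_of_hasDerivAt hW)
    · refine .of_forall fun x ↦ (abs_sub _ _).trans (add_le_add ?_ (hCW' x))
      rw [abs_pow]
      exact pow_le_pow_left₀ (abs_nonneg _) (hCW x) 2
  have hnonneg := sub_le_integral_of_hasDerivAt_le
    (fun x ↦ hasDerivAt_gap_boundary_term c (hW x) (hU x) (hw x) (hv x))
    (henergy.sub (hw2.integrable_sq.const_mul c)) (fun x ↦ ?_)
    (hboundary.mono_left atBot_le_cocompact) (hboundary.mono_left atTop_le_cocompact)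
  · simp only [Pi.sub_apply] at hnonneg
    rw [integral_sub henergy (hw2.integrable_sq.const_mul c), integral_const_mul] at hnonneg
    linarith
  · have := mul_nonneg (mul_nonneg hc (sub_nonneg.2 (hpartner x))) (sq_nonneg (v x))
    have := mul_nonneg hc (sq_nonneg (W x * v x - w x + U x * v x))
    have := sq_nonneg (w' x + W x * w x - c * v x)
    simp only [Pi.sub_apply]
    linarith

end SpectralGap

section PoschlTeller

lemma sech_pos (x : ℝ) : 0 < sech x := one_div_pos.2 (Real.cosh_pos x)

lemma sech_le_one (x : ℝ) : sech x ≤ 1 :=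
  div_le_one_of_le₀ (Real.one_le_cosh x) (Real.cosh_pos x).le

lemma sech_sq (x : ℝ) : sech x ^ 2 = 1 - Real.tanh x ^ 2 := by
  have := (Real.cosh_pos x).ne'
  rw [sech, Real.tanh_eq_sinh_div_cosh]
  field_simp
  linarith [Real.cosh_sq x]

lemma hasDerivAt_tanh (x : ℝ) : HasDerivAt Real.tanh (sech x ^ 2) x := by
  have hcosh := (Real.cosh_pos x).ne'
  rw [funext Real.tanh_eq_sinh_div_cosh]
  refine ((Real.hasDerivAt_sinh x).fun_div (Real.hasDerivAt_cosh x) hcosh).congr_deriv ?_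
  rw [sech]
  field_simp
  linarith [Real.cosh_sq x]

lemma hasDerivAt_sech (x : ℝ) : HasDerivAt sech (-(Real.tanh x * sech x)) x := by
  have hcosh := (Real.cosh_pos x).ne'
  refine ((hasDerivAt_const x 1).fun_div (Real.hasDerivAt_cosh x) hcosh).congr_deriv ?_
  rw [sech, Real.tanh_eq_sinh_div_cosh]
  field_simp
  ring

lemma continuous_sech : Continuous sech :=
  continuous_iff_continuousAt.2 fun x ↦ (hasDerivAt_sech x).continuousAt

lemma one_add_sq_div_two_le_cosh (x : ℝ) : 1 + x ^ 2 / 2 ≤ Real.cosh x := by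
  have hsinh : (x / 2) ^ 2 ≤ Real.sinh (x / 2) ^ 2 :=
    sq_le_sq.2 (by rw [Real.abs_sinh]; exact Real.self_le_sinh_iff.2 (abs_nonneg _))
  have hdouble := Real.cosh_two_mul (x / 2)
  rw [mul_div_cancel₀ x two_ne_zero] at hdouble
  linarith [Real.cosh_sq (x / 2)]

lemma sech_le_two_mul_inv_one_add_sq (x : ℝ) : sech x ≤ 2 * (1 + x ^ 2)⁻¹ := by
  rw [sech, ← div_eq_mul_inv, div_le_div_iff₀ (Real.cosh_pos x) (by positivity)]
  linarith [one_add_sq_div_two_le_cosh x]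

lemma integrable_sech : Integrable sech :=
  (integrable_inv_one_add_sq.const_mul 2).mono' continuous_sech.aestronglyMeasurable
    (.of_forall fun x ↦ by
      rw [Real.norm_of_nonneg (sech_pos x).le]
      exact sech_le_two_mul_inv_one_add_sq x)

lemma tendsto_sech_zero : Tendsto sech (cocompact ℝ) (𝓝 0) := by
  have habs (x : ℝ) : ‖x‖ ≤ Real.cosh x := by
    rw [Real.norm_eq_abs, ← Real.cosh_abs]
    exact (Real.self_le_sinh_iff.2 (abs_nonneg x)).trans (Real.sinh_lt_cosh _).le
  have hinv : sech = Real.cosh⁻¹ := funext fun x ↦ one_div _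
  rw [hinv]
  exact (tendsto_atTop_mono habs tendsto_norm_cocompact_atTop).inv_tendsto_atTop

lemma eventually_half_le_abs_tanh : ∀ᶠ x in cocompact ℝ, 1 / 2 ≤ |Real.tanh x| := by
  filter_upwards [tendsto_sech_zero.eventually_lt_const one_half_pos] with x hx
  rw [← sq_le_sq₀ one_half_pos.le (abs_nonneg _), sq_abs]
  nlinarith [sech_sq x, sech_pos x]

lemma hasDerivAt_const_mul_tanh_div (b a x : ℝ) :
    HasDerivAt (fun x ↦ b * Real.tanh (x / a)) (b / a * sech (x / a) ^ 2) x := by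
  have hcomp : HasDerivAt (fun x ↦ Real.tanh (x / a)) (sech (x / a) ^ 2 * (1 / a)) x :=
    (hasDerivAt_tanh (x / a)).comp (h := (· / a)) x ((hasDerivAt_id x).div_const a)
  exact (hcomp.const_mul b).congr_deriv (by ring)

lemma abs_const_mul_tanh_le (b x : ℝ) : |b * Real.tanh x| ≤ |b| := by
  rw [abs_mul]
  exact mul_le_of_le_one_right (abs_nonneg _) (Real.abs_tanh_lt_one _).le

lemma abs_const_mul_sech_sq_le (b x : ℝ) : |b * sech x ^ 2| ≤ |b| := by
  rw [abs_mul, abs_of_nonneg (sq_nonneg (sech x))]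
  exact mul_le_of_le_one_right (abs_nonneg _) (pow_le_one₀ (sech_pos x).le (sech_le_one x))

lemma isGroundState_sech_rpow {a ℓ : ℝ} (ha : a ≠ 0) (hℓ : 1 / 2 ≤ ℓ) :
    IsGroundState (fun x ↦ ℓ / a * Real.tanh (x / a)) (fun x ↦ sech (x / a) ^ ℓ) where
  pos x := Real.rpow_pos_of_pos (sech_pos _) ℓ
  hasDerivAt x := by
    have hsech := (sech_pos (x / a)).ne'
    have hcomp : HasDerivAt (fun x ↦ sech (x / a))
        (-(Real.tanh (x / a) * sech (x / a)) * (1 / a)) x :=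
      (hasDerivAt_sech (x / a)).comp (h₂ := sech) (h := (· / a)) x
        ((hasDerivAt_id x).div_const a)
    refine (hcomp.rpow_const (.inl hsech)).congr_deriv ?_
    rw [Real.rpow_sub_one hsech]
    field_simp
  memLp_two := by
    have hcont : Continuous fun x ↦ sech (x / a) ^ ℓ :=
      (continuous_sech.comp (continuous_id.div_const a)).rpow_const
        fun x ↦ .inl (sech_pos _).ne'
    rw [memLp_two_iff_integrable_sq hcont.aestronglyMeasurable]
    refine (integrable_sech.comp_div ha).mono' (hcont.pow 2).aestronglyMeasurable
      (.of_forall fun x ↦ ?_)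
    rw [Real.norm_of_nonneg (sq_nonneg _), ← Real.rpow_mul_natCast (sech_pos _).le]
    refine Real.rpow_le_self_of_le_one (sech_pos _).le (sech_le_one _) ?_
    push_cast
    linarith
  bounded := ⟨|ℓ / a|, fun x ↦ abs_const_mul_tanh_le _ _⟩
  bounded_below := by
    have hℓa : ℓ / a ≠ 0 := div_ne_zero (by linarith) ha
    refine ⟨|ℓ / a| * (1 / 2), mul_pos (abs_pos.2 hℓa) one_half_pos, ?_⟩
    have hdiv : Tendsto (fun x ↦ x / a) (cocompact ℝ) (cocompact ℝ) := by
      simpa only [div_eq_mul_inv] using tendsto_cocompact_mul_right₀ (inv_ne_zero ha)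
    filter_upwards [hdiv.eventually eventually_half_le_abs_tanh] with x hx
    rw [abs_mul]
    exact mul_le_mul_of_nonneg_left hx (abs_nonneg _)

lemma integrable_sech_sq_mul_sq {w : ℝ → ℝ} (a : ℝ) (hw2 : MemLp w 2) :
    Integrable fun x ↦ sech (x / a) ^ 2 * w x ^ 2 :=
  hw2.integrable_sq.bdd_mul (c := 1)
    ((continuous_sech.comp (continuous_id.div_const a)).pow 2).aestronglyMeasurable
    (.of_forall fun x ↦ by simpa using abs_const_mul_sech_sq_le 1 (x / a))

lemma integral_sech_sq_mul_sq_le {w : ℝ → ℝ} (a : ℝ) (hw2 : MemLp w 2) :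
    ∫ x, sech (x / a) ^ 2 * w x ^ 2 ≤ ∫ x, w x ^ 2 :=
  integral_mono (integrable_sech_sq_mul_sq a hw2) hw2.integrable_sq fun _ ↦
    mul_le_of_le_one_left (sq_nonneg _) (pow_le_one₀ (sech_pos _).le (sech_le_one _))

theorem poschlTeller_spectral_gap {w w' : ℝ → ℝ} {a ℓ : ℝ} (ha : a ≠ 0) (hℓ : 1 / 2 ≤ ℓ)
    (hw : ∀ x, HasDerivAt w (w' x) x) (hw2 : MemLp w 2) (hw'2 : MemLp w' 2)
    (horth : ∫ x, sech (x / a) ^ ℓ * w x = 0) :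
    ℓ * (ℓ + 1) * ∫ x, sech (x / a) ^ 2 * w x ^ 2 ≤
      a ^ 2 * (∫ x, w' x ^ 2) + (ℓ - 1) ^ 2 * ∫ x, w x ^ 2 := by
  have hgap := (isGroundState_sech_rpow ha hℓ).mul_integral_sq_le (c := (2 * ℓ - 1) / a ^ 2)
    (hasDerivAt_const_mul_tanh_div (ℓ / a) a) (hasDerivAt_const_mul_tanh_div ((ℓ - 1) / a) a)
    ⟨_, fun x ↦ abs_const_mul_sech_sq_le _ (x / a)⟩ ⟨_, fun x ↦ abs_const_mul_tanh_le _ (x / a)⟩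
    (div_nonneg (by linarith) (sq_nonneg a))
    (fun x ↦ le_of_eq (by rw [sech_sq]; field_simp; ring)) hw hw2 hw'2 horth
  have hsum : Integrable fun x ↦ w' x ^ 2 + ℓ ^ 2 / a ^ 2 * w x ^ 2 :=
    hw'2.integrable_sq.add (hw2.integrable_sq.const_mul _)
  have henergy : ∫ x, (w' x ^ 2 + ((ℓ / a * Real.tanh (x / a)) ^ 2
      - ℓ / a / a * sech (x / a) ^ 2) * w x ^ 2) = (∫ x, w' x ^ 2)
      + ℓ ^ 2 / a ^ 2 * (∫ x, w x ^ 2)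
      - ℓ * (ℓ + 1) / a ^ 2 * ∫ x, sech (x / a) ^ 2 * w x ^ 2 := by
    rw [← integral_const_mul, ← integral_const_mul,
      ← integral_add hw'2.integrable_sq (hw2.integrable_sq.const_mul _),
      ← integral_sub hsum ((integrable_sech_sq_mul_sq a hw2).const_mul _)]
    refine integral_congr_ae (.of_forall fun x ↦ ?_)
    simp only [sech_sq]
    field_simp
    ring
  rw [henergy] at hgap
  have ha2 : 0 < a ^ 2 := by positivity
  field_simp at hgap
  rw [div_le_div_iff_of_pos_right ha2] at hgap
  linarith

end PoschlTeller

theorem coercivity_orthogonal_to_ground_state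
    (w : ℝ → ℝ) (hdiff : Differentiable ℝ w)
    (hw2 : Integrable (fun x => (w x) ^ 2))
    (hw'2 : Integrable (fun x => (deriv w x) ^ 2))
    (horth : (∫ x : ℝ, w x * Y0 x) = 0) :
    (∫ x : ℝ, (deriv w x) ^ 2) + 2 * (∫ x : ℝ, (w x) ^ 2)
        - 3 * (∫ x : ℝ, sech (x / Real.sqrt 2) ^ 2 * (w x) ^ 2)
      ≥ (3 / 7) * ((∫ x : ℝ, (deriv w x) ^ 2) + (∫ x : ℝ, (w x) ^ 2)) := by
  have hwL2 : MemLp w 2 :=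
    (memLp_two_iff_integrable_sq hdiff.continuous.aestronglyMeasurable).2 hw2
  have hw'L2 : MemLp (deriv w) 2 :=
    (memLp_two_iff_integrable_sq (measurable_deriv w).aestronglyMeasurable).2 hw'2
  have horth_sech : ∫ x, sech (x / √2) ^ (2 : ℝ) * w x = 0 := by
    have hY0 (x : ℝ) : sech (x / √2) ^ (2 : ℝ) * w x = 2 * (w x * Y0 x) := by
      rw [Y0, Real.rpow_two]
      ring
    simp only [hY0, integral_const_mul, horth, mul_zero]
  have hgap := poschlTeller_spectral_gap (Real.sqrt_ne_zero'.2 two_pos) (by norm_num)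
    (fun x ↦ (hdiff x).hasDerivAt) hwL2 hw'L2 horth_sech
  rw [Real.sq_sqrt zero_le_two] at hgap
  have hpotential := integral_sech_sq_mul_sq_le √2 hwL2
  linarith
end

section
/- For every odd differentiable function w : ℝ → ℝ with w and w' square integrable on ℝ, one has ∫_ℝ w'(x)² dx - 3·∫_ℝ sech²(x/2)·w(x)² dx + ( ∫_ℝ Ỹ₁(x)·w(x) dx )² ≥ 0, where Ỹ₁(x) = √(15/8)·sinh(x/2)/cosh³(x/2). -/
open MeasureTheory

noncomputable def Ytilde (x : ℝ) : ℝ :=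
  Real.sqrt (15 / 8) * Real.sinh (x / 2) / Real.cosh (x / 2) ^ 3

/-!
All integrands are even, so the problem lives on the half line `(0, ∞)` with a Dirichlet condition
at `0`, where the odd bound state `Y` is a positive ground state of `L = -d²/dx² - V` with
eigenvalue `-μ = -1`. It factors `L + μ = A*A` with `A = d/dx - Y'/Y`. For `v` orthogonal to `Y`
the equation `v = -A*z` has the decaying solution `z = Y⁻¹ ∫₀ˣ Y v`, and a second factorization
`AA* - μ = B*B`, available because `AA* u = μ u` has a positive solution `u`, gives
`⟨v, Lv⟩ = ⟨AA*z, (AA* - μ)z⟩ = ‖(AA* - μ)z‖² + μ ‖Bz‖² ≥ 0`.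
A general `w` is reduced to this case by subtracting its component along `Y`, which replaces
`⟨w, Lw⟩` by `⟨w, Lw⟩ + μ ⟨Y, w⟩² / ‖Y‖²`.
-/

open Filter Topology Set

section Calculus

variable {f g g' φ : ℝ → ℝ} {a A B df dg : ℝ}

lemma sub_le_integral_Ioi_of_hasDerivAt_le (hg : ∀ x ∈ Ioi a, HasDerivAt g (g' x) x)
    (hle : ∀ x ∈ Ioi a, g' x ≤ φ x) (hφ : IntegrableOn φ (Ioi a))
    (hA : Tendsto g (𝓝[>] a) (𝓝 A)) (hB : Tendsto g atTop (𝓝 B)) :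
    B - A ≤ ∫ x in Ioi a, φ x := by
  have bound_from (x : ℝ) (hx : x ∈ Ioi a) : B - g x ≤ ∫ y in Ioi x, φ y := by
    refine le_of_tendsto_of_tendsto (hB.sub_const (g x))
      (intervalIntegral_tendsto_integral_Ioi x (hφ.mono_set (Ioi_subset_Ioi hx.le)) tendsto_id) ?_
    filter_upwards [eventually_ge_atTop x] with R hR
    exact intervalIntegral.sub_le_integral_of_hasDeriv_right_of_le hR
      (fun y hy => (hg y (hx.trans_le hy.1)).continuousAt.continuousWithinAt)
      (fun y hy => (hg y (hx.trans hy.1)).hasDerivWithinAt)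
      (hφ.mono_set fun y hy => hx.trans_le hy.1) (fun y hy => hle y (hx.trans hy.1))
  have tail_tendsto : Tendsto (fun x => ∫ y in Ioi x, φ y) (𝓝[>] a) (𝓝 (∫ y in Ioi a, φ y)) := by
    refine ((aecover_Ioi_of_Ioi (tendsto_id.mono_left nhdsWithin_le_nhds)
      ).integral_tendsto_of_countably_generated hφ).congr' ?_
    filter_upwards [self_mem_nhdsWithin] with x hx
    rw [id, Measure.restrict_restrict measurableSet_Ioi,
      inter_eq_self_of_subset_left (Ioi_subset_Ioi (mem_Ioi.1 hx).le)]
  exact le_of_tendsto_of_tendsto (hA.const_sub B) tail_tendsto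
    (eventually_mem_nhdsWithin.mono bound_from)

lemma tendsto_div_of_hasDerivAt_of_eq_zero (hf : HasDerivAt f df a) (hg : HasDerivAt g dg a)
    (hfa : f a = 0) (hga : g a = 0) (hdg : dg ≠ 0) :
    Tendsto (fun x => f x / g x) (𝓝[≠] a) (𝓝 (df / dg)) := by
  refine (hf.tendsto_slope.div hg.tendsto_slope hdg).congr' ?_
  filter_upwards [self_mem_nhdsWithin] with x hx
  simp only [Pi.div_apply, slope_def_field, hfa, hga, sub_zero]
  exact div_div_div_cancel_right₀ (sub_ne_zero.2 hx) _ _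

lemma integral_eq_two_mul_integral_Ioi_of_even (hf : Function.Even f) :
    ∫ x, f x = 2 * ∫ x in Ioi 0, f x := by
  rw [← integral_comp_abs]
  congr 1 with x
  rcases abs_choice x with h | h <;> rw [h]
  exact (hf x).symm

lemma even_deriv_of_odd (hf : Function.Odd f) : Function.Even (deriv f) := fun x => by
  have h := deriv_comp_neg f x
  rw [show (fun y => f (-y)) = fun y => -f y from funext hf, deriv.fun_neg] at h
  exact neg_injective h.symm

end Calculus

section FormDomain

/-- The form domain of a Schrödinger operator on `(0, ∞)` with Dirichlet condition at `0`.
Functions live on `ℝ`, carry their derivative `f'` explicitly, and are square integrable together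
with it on the half line. -/
structure DirichletFormDomain (f f' : ℝ → ℝ) : Prop where
  hasDerivAt : ∀ x, HasDerivAt f (f' x) x
  map_zero : f 0 = 0
  memLp : MemLp f 2 (volume.restrict (Ioi 0))
  memLp_deriv : MemLp f' 2 (volume.restrict (Ioi 0))

/-- The quadratic form of `-d²/dx² - V` on the half line `(0, ∞)`, for `f` with derivative `f'`. -/
noncomputable def schrodingerForm (V f f' : ℝ → ℝ) : ℝ :=
  ∫ x in Ioi 0, (f' x ^ 2 - V x * f x ^ 2)

variable {V f f' g g' : ℝ → ℝ}

namespace DirichletFormDomain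

lemma continuous (hf : DirichletFormDomain f f') : Continuous f :=
  Differentiable.continuous fun x => (hf.hasDerivAt x).differentiableAt

lemma sub_const_mul (hf : DirichletFormDomain f f') (hg : DirichletFormDomain g g') (c : ℝ) :
    DirichletFormDomain (fun x => f x - c * g x) (fun x => f' x - c * g' x) where
  hasDerivAt x := (hf.hasDerivAt x).fun_sub ((hg.hasDerivAt x).const_mul c)
  map_zero := by rw [hf.map_zero, hg.map_zero, mul_zero, sub_zero]
  memLp := hf.memLp.sub (hg.memLp.const_mul c)
  memLp_deriv := hf.memLp_deriv.sub (hg.memLp_deriv.const_mul c)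

lemma tendsto_atTop (hf : DirichletFormDomain f f') : Tendsto f atTop (𝓝 0) := by
  have hsq : Tendsto (fun x => f x ^ 2) atTop (𝓝 0) := by
    refine tendsto_zero_of_hasDerivAt_of_integrableOn_Ioi (a := 0)
      (fun x _ => (hf.hasDerivAt x).fun_pow 2) ?_ hf.memLp.integrable_sq
    simpa [mul_assoc, IntegrableOn] using
      (hf.memLp.integrable_mul hf.memLp_deriv).const_mul 2
  rw [tendsto_zero_iff_abs_tendsto_zero, Function.comp_def]
  simpa only [Real.sqrt_sq_eq_abs, Real.sqrt_zero] using hsq.sqrt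

lemma tendsto_nhdsGT_zero (hf : DirichletFormDomain f f') : Tendsto f (𝓝[>] 0) (𝓝 0) :=
  (hf.continuous.tendsto' 0 0 hf.map_zero).mono_left nhdsWithin_le_nhds

lemma integrableOn_potential_mul (hV : MemLp V ⊤ (volume.restrict (Ioi 0)))
    (hf : DirichletFormDomain f f') (hg : DirichletFormDomain g g') :
    IntegrableOn (fun x => V x * (f x * g x)) (Ioi 0) := by
  have hVf : MemLp (V * f) 2 (volume.restrict (Ioi 0)) := hf.memLp.mul hV
  simpa only [IntegrableOn, Pi.mul_def, mul_assoc] using hVf.integrable_mul hg.memLp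

lemma integrableOn_potential_mul_sq (hV : MemLp V ⊤ (volume.restrict (Ioi 0)))
    (hf : DirichletFormDomain f f') : IntegrableOn (fun x => V x * f x ^ 2) (Ioi 0) := by
  simpa only [sq] using hf.integrableOn_potential_mul hV hf

end DirichletFormDomain

end FormDomain

section GroundState

/-- `Y`, with derivative `Y'`, is a positive Dirichlet ground state of `-d²/dx² - V` on `(0, ∞)`
with eigenvalue `-μ`. The conditions at `0` and at infinity are those that make the boundary terms
of the factorization `A = d/dx - Y'/Y` vanish. -/
structure IsDirichletGroundState (V : ℝ → ℝ) (μ : ℝ) (Y Y' : ℝ → ℝ) : Prop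
    extends DirichletFormDomain Y Y' where
  hasDerivAt_deriv : ∀ x, HasDerivAt Y' ((μ - V x) * Y x) x
  pos : ∀ x ∈ Ioi 0, 0 < Y x
  deriv_zero_ne_zero : Y' 0 ≠ 0
  exists_tendsto_logDeriv : ∃ l ≠ 0, Tendsto (fun x => Y' x / Y x) atTop (𝓝 l)

/-- With `A = d/dx - Y'/Y`, so that `A*A = -d²/dx² - V + μ`, the function `r` is the logarithmic
derivative `u'/u` of a positive solution of `AA*u = μu` on `(0, ∞)`, encoded by its Riccati
equation and by limits at both ends. The existence of `u` means `AA* ≥ μ`, hence that `-μ` is the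
only negative eigenvalue. -/
structure IsPartnerLogDeriv (V : ℝ → ℝ) (μ : ℝ) (Y Y' r : ℝ → ℝ) : Prop where
  hasDerivAt : ∀ x ∈ Ioi 0, HasDerivAt r (2 * ((Y' x / Y x) ^ 2 - μ) + V x - r x ^ 2) x
  exists_tendsto_zero : ∃ l, Tendsto (fun x => Y x * r x) (𝓝[>] 0) (𝓝 l)
  exists_tendsto_atTop : ∃ l, Tendsto r atTop (𝓝 l)

/-- The boundary term produced by completing squares in the quadratic form: `p = Y'/Y`,
`r` as in `IsPartnerLogDeriv`, and `z` solves `-A*z = v`. -/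
def darbouxBoundary (μ : ℝ) (p r v z : ℝ → ℝ) (x : ℝ) : ℝ :=
  p x * v x ^ 2 - 2 * μ * (z x * v x) + μ * ((p x + r x) * z x ^ 2)

/-- The partial inner product of `Y` and `v` over `(0, x)`; divided by `Y`, it inverts `-A*`. -/
noncomputable def partialInner (Y v : ℝ → ℝ) (x : ℝ) : ℝ := ∫ t in (0 : ℝ)..x, Y t * v t

variable {V Y Y' r v v' : ℝ → ℝ} {μ : ℝ}

-- The subtracted squares are `(Av + μz)²` and `μ (z' - r z)²`.
lemma hasDerivAt_darbouxBoundary {p z : ℝ → ℝ} {U dv x : ℝ}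
    (hp : HasDerivAt p (μ - U - p x ^ 2) x)
    (hr : HasDerivAt r (2 * (p x ^ 2 - μ) + U - r x ^ 2) x)
    (hv : HasDerivAt v dv x) (hz : HasDerivAt z (v x - p x * z x) x) :
    HasDerivAt (darbouxBoundary μ p r v z)
      (dv ^ 2 - U * v x ^ 2
        - ((dv - p x * v x + μ * z x) ^ 2 + μ * (v x - p x * z x - r x * z x) ^ 2)) x := by
  refine ((hp.fun_mul (hv.fun_pow 2)).fun_sub ((hz.fun_mul hv).const_mul (2 * μ)) |>.fun_add
    (((hp.fun_add hr).fun_mul (hz.fun_pow 2)).const_mul μ)).congr_deriv ?_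
  push_cast
  ring

lemma hasDerivAt_partialInner (hY : Continuous Y) (hv : Continuous v) (x : ℝ) :
    HasDerivAt (partialInner Y v) (Y x * v x) x :=
  ((hY.mul hv).integral_hasStrictDerivAt 0 x).hasDerivAt

namespace IsDirichletGroundState

lemma hasDerivAt_logDeriv (hY : IsDirichletGroundState V μ Y Y') {x : ℝ} (hx : x ∈ Ioi 0) :
    HasDerivAt (fun x => Y' x / Y x) (μ - V x - (Y' x / Y x) ^ 2) x := by
  have hYx := (hY.pos x hx).ne'
  refine ((hY.hasDerivAt_deriv x).fun_div (hY.hasDerivAt x) hYx).congr_deriv ?_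
  field_simp

lemma hasDerivAt_partialInner_div (hY : IsDirichletGroundState V μ Y Y')
    (hv : Continuous v) {x : ℝ} (hx : x ∈ Ioi 0) :
    HasDerivAt (fun x => partialInner Y v x / Y x)
      (v x - Y' x / Y x * (partialInner Y v x / Y x)) x := by
  have hYx := (hY.pos x hx).ne'
  refine ((hasDerivAt_partialInner hY.continuous hv x).fun_div (hY.hasDerivAt x) hYx).congr_deriv ?_
  field_simp

lemma tendsto_deriv_nhdsGT_zero (hY : IsDirichletGroundState V μ Y Y') :
    Tendsto Y' (𝓝[>] 0) (𝓝 (Y' 0)) :=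
  (hY.hasDerivAt_deriv 0).continuousAt.tendsto.mono_left nhdsWithin_le_nhds

lemma tendsto_partialInner_div_sq_nhdsGT_zero (hY : IsDirichletGroundState V μ Y Y')
    (hv : DirichletFormDomain v v') :
    Tendsto (fun x => partialInner Y v x / Y x ^ 2) (𝓝[>] 0) (𝓝 0) := by
  have hJ := hasDerivAt_partialInner hY.continuous hv.continuous
  have hJ0 : Tendsto (partialInner Y v) (𝓝[>] 0) (𝓝 0) :=
    ((Differentiable.continuous fun x => (hJ x).differentiableAt).tendsto' 0 0
      (by simp [partialInner])).mono_left nhdsWithin_le_nhds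
  have hquot : Tendsto (fun x => v x / (2 * Y' x)) (𝓝[>] 0) (𝓝 0) := by
    simpa [Pi.div_def] using hv.tendsto_nhdsGT_zero.div (hY.tendsto_deriv_nhdsGT_zero.const_mul 2)
      (mul_ne_zero two_ne_zero hY.deriv_zero_ne_zero)
  refine HasDerivAt.lhopital_zero_nhdsGT (.of_forall hJ)
    (.of_forall fun x => (hY.hasDerivAt x).fun_pow 2) ?_ hJ0
    (by simpa using hY.tendsto_nhdsGT_zero.pow 2) (hquot.congr' ?_)
  · filter_upwards [self_mem_nhdsWithin,
      hY.tendsto_deriv_nhdsGT_zero.eventually_ne hY.deriv_zero_ne_zero] with x hx hY'x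
    have := (hY.pos x hx).ne'
    positivity
  · filter_upwards [self_mem_nhdsWithin] with x hx
    have := (hY.pos x hx).ne'
    field_simp
    norm_num

lemma tendsto_partialInner_div_atTop (hY : IsDirichletGroundState V μ Y Y')
    (hv : DirichletFormDomain v v') (horth : ∫ x in Ioi 0, Y x * v x = 0) :
    Tendsto (fun x => partialInner Y v x / Y x) atTop (𝓝 0) := by
  obtain ⟨l, hl, hp⟩ := hY.exists_tendsto_logDeriv
  have hJ : Tendsto (partialInner Y v) atTop (𝓝 0) := horth ▸
    intervalIntegral_tendsto_integral_Ioi 0 (hY.memLp.integrable_mul hv.memLp) tendsto_id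
  have hquot : Tendsto (fun x => v x / (Y' x / Y x)) atTop (𝓝 0) := by
    simpa [Pi.div_def] using hv.tendsto_atTop.div hp hl
  refine HasDerivAt.lhopital_zero_atTop
    (.of_forall (hasDerivAt_partialInner hY.continuous hv.continuous)) (.of_forall hY.hasDerivAt)
    ((hp.eventually_ne hl).mono fun x hx => (div_ne_zero_iff.1 hx).1) hJ hY.tendsto_atTop
    (hquot.congr fun x => ?_)
  rw [div_div_eq_mul_div, mul_comm]

lemma tendsto_darbouxBoundary_nhdsGT_zero (hY : IsDirichletGroundState V μ Y Y')
    (hr : IsPartnerLogDeriv V μ Y Y' r) (hv : DirichletFormDomain v v') :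
    Tendsto (darbouxBoundary μ (fun x => Y' x / Y x) r v fun x => partialInner Y v x / Y x)
      (𝓝[>] 0) (𝓝 0) := by
  obtain ⟨l, hYr⟩ := hr.exists_tendsto_zero
  have hY0 := hY.tendsto_nhdsGT_zero
  have hv0 := hv.tendsto_nhdsGT_zero
  have hY'0 := hY.tendsto_deriv_nhdsGT_zero
  have hJ := hY.tendsto_partialInner_div_sq_nhdsGT_zero hv
  have hvY : Tendsto (fun x => v x / Y x) (𝓝[>] 0) (𝓝 (v' 0 / Y' 0)) :=
    (tendsto_div_of_hasDerivAt_of_eq_zero (hv.hasDerivAt 0) (hY.hasDerivAt 0) hv.map_zero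
      hY.map_zero hY.deriv_zero_ne_zero).mono_left (nhdsWithin_mono 0 fun x hx => ne_of_gt hx)
  have hlim : Tendsto (fun x => Y' x * (v x / Y x) * v x
      - 2 * μ * (partialInner Y v x / Y x ^ 2 * Y x * v x)
      + μ * ((Y' x + Y x * r x) * (partialInner Y v x / Y x ^ 2) ^ 2 * Y x)) (𝓝[>] 0) (𝓝 0) := by
    simpa using (((hY'0.mul hvY).mul hv0).sub (((hJ.mul hY0).mul hv0).const_mul (2 * μ))).add
      ((((hY'0.add hYr).mul (hJ.pow 2)).mul hY0).const_mul μ)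
  refine hlim.congr' ?_
  filter_upwards [self_mem_nhdsWithin] with x hx
  have := (hY.pos x hx).ne'
  unfold darbouxBoundary
  field_simp

lemma tendsto_darbouxBoundary_atTop (hY : IsDirichletGroundState V μ Y Y')
    (hr : IsPartnerLogDeriv V μ Y Y' r) (hv : DirichletFormDomain v v')
    (horth : ∫ x in Ioi 0, Y x * v x = 0) :
    Tendsto (darbouxBoundary μ (fun x => Y' x / Y x) r v fun x => partialInner Y v x / Y x)
      atTop (𝓝 0) := by
  obtain ⟨l, -, hp⟩ := hY.exists_tendsto_logDeriv
  obtain ⟨m, hr⟩ := hr.exists_tendsto_atTop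
  have hv0 := hv.tendsto_atTop
  have hz := hY.tendsto_partialInner_div_atTop hv horth
  unfold darbouxBoundary
  simpa using ((hp.mul (hv0.pow 2)).sub ((hz.mul hv0).const_mul (2 * μ))).add
    (((hp.add hr).mul (hz.pow 2)).const_mul μ)

theorem schrodingerForm_nonneg_of_orthogonal (hY : IsDirichletGroundState V μ Y Y')
    (hr : IsPartnerLogDeriv V μ Y Y' r) (hμ : 0 ≤ μ) (hV : MemLp V ⊤ (volume.restrict (Ioi 0)))
    (hv : DirichletFormDomain v v') (horth : ∫ x in Ioi 0, Y x * v x = 0) :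
    0 ≤ schrodingerForm V v v' := by
  rw [← sub_zero (0 : ℝ)]
  refine sub_le_integral_Ioi_of_hasDerivAt_le
    (fun x hx => hasDerivAt_darbouxBoundary (hY.hasDerivAt_logDeriv hx) (hr.hasDerivAt x hx)
      (hv.hasDerivAt x) (hY.hasDerivAt_partialInner_div hv.continuous hx))
    (fun x _ => sub_le_self _ (by positivity))
    (hv.memLp_deriv.integrable_sq.sub (hv.integrableOn_potential_mul_sq hV))
    (hY.tendsto_darbouxBoundary_nhdsGT_zero hr hv)
    (hY.tendsto_darbouxBoundary_atTop hr hv horth)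

lemma integral_deriv_mul_deriv_sub (hY : IsDirichletGroundState V μ Y Y')
    (hV : MemLp V ⊤ (volume.restrict (Ioi 0))) (hv : DirichletFormDomain v v') :
    ∫ x in Ioi 0, (v' x * Y' x - V x * (v x * Y x)) = -μ * ∫ x in Ioi 0, Y x * v x := by
  have hform : IntegrableOn (fun x => v' x * Y' x - V x * (v x * Y x)) (Ioi 0) :=
    (hv.memLp_deriv.integrable_mul hY.memLp_deriv).sub
      (hv.integrableOn_potential_mul hV hY.toDirichletFormDomain)
  have hinner : IntegrableOn (fun x => μ * (Y x * v x)) (Ioi 0) :=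
    (hY.memLp.integrable_mul hv.memLp).const_mul μ
  have hderiv (x : ℝ) : HasDerivAt (fun x => v x * Y' x)
      (v' x * Y' x - V x * (v x * Y x) + μ * (Y x * v x)) x :=
    ((hv.hasDerivAt x).fun_mul (hY.hasDerivAt_deriv x)).congr_deriv (by ring)
  have hlim : Tendsto (fun x => v x * Y' x) atTop (𝓝 0) :=
    tendsto_zero_of_hasDerivAt_of_integrableOn_Ioi (fun x _ => hderiv x) (hform.add hinner)
      (hv.memLp.integrable_mul hY.memLp_deriv)
  have hgreen := integral_Ioi_of_hasDerivAt_of_tendsto' (fun x _ => hderiv x)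
    (hform.add hinner) hlim
  rw [integral_add hform hinner, integral_const_mul, hv.map_zero] at hgreen
  linarith

lemma schrodingerForm_sub_const_mul (hY : IsDirichletGroundState V μ Y Y')
    (hV : MemLp V ⊤ (volume.restrict (Ioi 0))) (hv : DirichletFormDomain v v') (c : ℝ) :
    schrodingerForm V (fun x => v x - c * Y x) (fun x => v' x - c * Y' x)
      = schrodingerForm V v v' + 2 * c * μ * (∫ x in Ioi 0, Y x * v x)
        - c ^ 2 * μ * ∫ x in Ioi 0, Y x ^ 2 := by
  have hvv := hv.memLp_deriv.integrable_sq.sub (hv.integrableOn_potential_mul_sq hV)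
  have hvY := (hv.memLp_deriv.integrable_mul hY.memLp_deriv).sub
    (hv.integrableOn_potential_mul hV hY.toDirichletFormDomain)
  have hYY := (hY.memLp_deriv.integrable_mul hY.memLp_deriv).sub
    (hY.integrableOn_potential_mul hV hY.toDirichletFormDomain)
  have hcross := hY.integral_deriv_mul_deriv_sub hV hv
  have hself := hY.integral_deriv_mul_deriv_sub hV hY.toDirichletFormDomain
  calc schrodingerForm V (fun x => v x - c * Y x) (fun x => v' x - c * Y' x)
      = ∫ x in Ioi 0, ((v' x ^ 2 - V x * v x ^ 2)
          - 2 * c * (v' x * Y' x - V x * (v x * Y x))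
          + c ^ 2 * (Y' x * Y' x - V x * (Y x * Y x))) := by
        unfold schrodingerForm
        congr 1 with x
        ring
    _ = schrodingerForm V v v' - 2 * c * (∫ x in Ioi 0, (v' x * Y' x - V x * (v x * Y x)))
          + c ^ 2 * ∫ x in Ioi 0, (Y' x * Y' x - V x * (Y x * Y x)) := by
        rw [← integral_const_mul, ← integral_const_mul, schrodingerForm]
        exact (integral_add (hvv.sub (hvY.const_mul _)) (hYY.const_mul _)).trans
          (congrArg (· + _) (integral_sub hvv (hvY.const_mul _)))
    _ = _ := by
        rw [hcross, hself]
        simp only [sq]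
        ring

lemma integral_sq_pos (hY : IsDirichletGroundState V μ Y Y') : 0 < ∫ x in Ioi 0, Y x ^ 2 := by
  rw [setIntegral_pos_iff_support_of_nonneg_ae (.of_forall fun x => sq_nonneg (Y x))
    hY.memLp.integrable_sq]
  have hsub : Ioi 0 ⊆ (Function.support fun x => Y x ^ 2) ∩ Ioi 0 := fun x hx =>
    ⟨pow_ne_zero 2 (hY.pos x hx).ne', hx⟩
  exact (by simp : 0 < volume (Ioi (0 : ℝ))).trans_le (measure_mono hsub)

theorem schrodingerForm_add_sq_nonneg (hY : IsDirichletGroundState V μ Y Y')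
    (hr : IsPartnerLogDeriv V μ Y Y' r) (hμ : 0 ≤ μ) (hV : MemLp V ⊤ (volume.restrict (Ioi 0)))
    (hv : DirichletFormDomain v v') :
    0 ≤ schrodingerForm V v v'
      + μ * (∫ x in Ioi 0, Y x * v x) ^ 2 / ∫ x in Ioi 0, Y x ^ 2 := by
  have hN := hY.integral_sq_pos.ne'
  set N := ∫ x in Ioi 0, Y x ^ 2
  set c := (∫ x in Ioi 0, Y x * v x) / N with hc
  have horth : ∫ x in Ioi 0, Y x * (v x - c * Y x) = 0 := by
    calc ∫ x in Ioi 0, Y x * (v x - c * Y x)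
        = ∫ x in Ioi 0, (Y x * v x - c * Y x ^ 2) := by congr 1 with x; ring
      _ = (∫ x in Ioi 0, Y x * v x) - c * N := by
        rw [← integral_const_mul]
        exact integral_sub (hY.memLp.integrable_mul hv.memLp)
          (hY.memLp.integrable_sq.const_mul c)
      _ = 0 := by rw [hc, div_mul_cancel₀ _ hN, sub_self]
  have h := hY.schrodingerForm_nonneg_of_orthogonal hr hμ hV
    (hv.sub_const_mul hY.toDirichletFormDomain c) horth
  rw [hY.schrodingerForm_sub_const_mul hV hv] at h
  refine h.trans_eq ?_
  rw [hc]
  field_simp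
  ring

end IsDirichletGroundState

end GroundState

section OddBoundState

/-- The function `tanh (x / 2)`, in which the bound state and its companions are polynomial or
rational. -/
noncomputable def halfTanh (x : ℝ) : ℝ := Real.tanh (x / 2)

/-- The odd bound state of `-d²/dx² - 3 sech²(x/2)`, without its normalizing constant. -/
noncomputable def oddBoundState (x : ℝ) : ℝ := halfTanh x * (1 - halfTanh x ^ 2)

/-- The derivative of `oddBoundState`. -/
noncomputable def oddBoundStateDeriv (x : ℝ) : ℝ :=
  (1 - 3 * halfTanh x ^ 2) * (1 - halfTanh x ^ 2) / 2

lemma sech_half_sq (x : ℝ) : sech (x / 2) ^ 2 = 1 - halfTanh x ^ 2 := by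
  have := Real.cosh_pos (x / 2)
  rw [sech, halfTanh, Real.tanh_eq_sinh_div_cosh]
  field_simp
  linarith [Real.cosh_sq (x / 2)]

lemma Ytilde_eq (x : ℝ) : Ytilde x = √(15 / 8) * oddBoundState x := by
  have := Real.cosh_pos (x / 2)
  rw [oddBoundState, ← sech_half_sq, Ytilde, sech, halfTanh, Real.tanh_eq_sinh_div_cosh]
  field_simp

lemma halfTanh_zero : halfTanh 0 = 0 := by simp [halfTanh]

lemma one_sub_halfTanh_sq_pos (x : ℝ) : 0 < 1 - halfTanh x ^ 2 :=
  sub_pos.2 (Real.tanh_sq_lt_one _)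

lemma halfTanh_pos {x : ℝ} (hx : x ∈ Ioi 0) : 0 < halfTanh x := by
  rw [halfTanh, Real.tanh_eq_sinh_div_cosh]
  exact div_pos (Real.sinh_pos_iff.2 (half_pos hx)) (Real.cosh_pos _)

lemma hasDerivAt_halfTanh (x : ℝ) : HasDerivAt halfTanh ((1 - halfTanh x ^ 2) / 2) x := by
  have hcosh := (Real.cosh_pos (x / 2)).ne'
  have hhalf := (hasDerivAt_id' x).div_const 2
  rw [show halfTanh = fun x => Real.sinh (x / 2) / Real.cosh (x / 2) from
    funext fun x => Real.tanh_eq_sinh_div_cosh _]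
  refine (hhalf.sinh.fun_div hhalf.cosh hcosh).congr_deriv ?_
  field_simp

lemma continuous_halfTanh : Continuous halfTanh :=
  Differentiable.continuous fun x => (hasDerivAt_halfTanh x).differentiableAt

lemma halfTanh_eq_one_sub (x : ℝ) : halfTanh x = 1 - 2 / (Real.exp x + 1) := by
  have hexp : Real.exp x = Real.exp (x / 2) ^ 2 := by rw [← Real.exp_nat_mul]; congr 1; ring
  rw [halfTanh, Real.tanh_eq, hexp, Real.exp_neg]
  field_simp
  ring

lemma tendsto_halfTanh_atTop : Tendsto halfTanh atTop (𝓝 1) := by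
  have h : Tendsto (fun x => 2 / (Real.exp x + 1)) atTop (𝓝 0) :=
    tendsto_const_nhds.div_atTop (tendsto_atTop_add_const_right _ _ Real.tendsto_exp_atTop)
  simpa only [← halfTanh_eq_one_sub, sub_zero] using h.const_sub 1

lemma tendsto_halfTanh_nhdsGT_zero : Tendsto halfTanh (𝓝[>] 0) (𝓝 0) :=
  (continuous_halfTanh.tendsto' 0 0 halfTanh_zero).mono_left nhdsWithin_le_nhds

lemma hasDerivAt_oddBoundState (x : ℝ) : HasDerivAt oddBoundState (oddBoundStateDeriv x) x := by
  have hT := hasDerivAt_halfTanh x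
  refine (hT.fun_mul ((hT.fun_pow 2).const_sub 1)).congr_deriv ?_
  rw [oddBoundStateDeriv]
  push_cast
  ring

lemma hasDerivAt_oddBoundStateDeriv (x : ℝ) :
    HasDerivAt oddBoundStateDeriv ((1 - 3 * sech (x / 2) ^ 2) * oddBoundState x) x := by
  have hT2 := (hasDerivAt_halfTanh x).fun_pow 2
  refine ((((hT2.const_mul 3).const_sub 1).fun_mul (hT2.const_sub 1)).div_const 2).congr_deriv ?_
  rw [sech_half_sq, oddBoundState]
  push_cast
  ring

lemma integrableOn_one_sub_halfTanh_sq : IntegrableOn (fun x => 1 - halfTanh x ^ 2) (Ioi 0) := by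
  refine integrableOn_Ioi_deriv_of_nonneg' (g := fun x => 2 * halfTanh x)
    (fun x _ => ?_) (fun x _ => (one_sub_halfTanh_sq_pos x).le)
    (tendsto_halfTanh_atTop.const_mul 2)
  exact ((hasDerivAt_halfTanh x).const_mul 2).congr_deriv (by ring)

lemma memLp_two_of_sq_le_one_sub_halfTanh_sq {f : ℝ → ℝ} (hf : Continuous f)
    (hle : ∀ x, f x ^ 2 ≤ 1 - halfTanh x ^ 2) : MemLp f 2 (volume.restrict (Ioi 0)) := by
  rw [memLp_two_iff_integrable_sq hf.aestronglyMeasurable]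
  refine integrableOn_one_sub_halfTanh_sq.mono' (hf.pow 2).aestronglyMeasurable (.of_forall ?_)
  exact fun x => (Real.norm_of_nonneg (sq_nonneg _)).trans_le (hle x)

lemma dirichletFormDomain_oddBoundState :
    DirichletFormDomain oddBoundState oddBoundStateDeriv where
  hasDerivAt := hasDerivAt_oddBoundState
  map_zero := by simp [oddBoundState, halfTanh_zero]
  memLp := by
    refine memLp_two_of_sq_le_one_sub_halfTanh_sq
      (Differentiable.continuous fun x => (hasDerivAt_oddBoundState x).differentiableAt) fun x => ?_
    have h := one_sub_halfTanh_sq_pos x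
    have := sq_nonneg (halfTanh x)
    rw [oddBoundState, mul_pow, sq (1 - halfTanh x ^ 2), ← mul_assoc]
    exact mul_le_of_le_one_left h.le (by nlinarith)
  memLp_deriv := by
    refine memLp_two_of_sq_le_one_sub_halfTanh_sq (Differentiable.continuous fun x =>
      (hasDerivAt_oddBoundStateDeriv x).differentiableAt) fun x => ?_
    have h := one_sub_halfTanh_sq_pos x
    have hsq := sq_nonneg (halfTanh x)
    have hfactor : ((1 - 3 * halfTanh x ^ 2) / 2) ^ 2 ≤ 1 := by
      rw [sq_le_one_iff_abs_le_one, abs_le]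
      constructor <;> linarith
    calc oddBoundStateDeriv x ^ 2
        = ((1 - 3 * halfTanh x ^ 2) / 2) ^ 2 * (1 - halfTanh x ^ 2) * (1 - halfTanh x ^ 2) := by
          rw [oddBoundStateDeriv]; ring
      _ ≤ 1 - halfTanh x ^ 2 := mul_le_of_le_one_left h.le (by nlinarith)

lemma oddBoundState_pos {x : ℝ} (hx : x ∈ Ioi 0) : 0 < oddBoundState x :=
  mul_pos (halfTanh_pos hx) (one_sub_halfTanh_sq_pos x)

lemma oddBoundState_logDeriv (x : ℝ) :
    oddBoundStateDeriv x / oddBoundState x = (1 - 3 * halfTanh x ^ 2) / (2 * halfTanh x) := by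
  rw [oddBoundStateDeriv, oddBoundState, div_div, ← mul_assoc,
    mul_div_mul_right _ _ (one_sub_halfTanh_sq_pos x).ne']

theorem isDirichletGroundState_oddBoundState :
    IsDirichletGroundState (fun x => 3 * sech (x / 2) ^ 2) 1 oddBoundState oddBoundStateDeriv where
  toDirichletFormDomain := dirichletFormDomain_oddBoundState
  hasDerivAt_deriv := hasDerivAt_oddBoundStateDeriv
  pos _ := oddBoundState_pos
  deriv_zero_ne_zero := by norm_num [oddBoundStateDeriv, halfTanh_zero]
  exists_tendsto_logDeriv := by
    have hT := tendsto_halfTanh_atTop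
    refine ⟨(1 - 3 * 1 ^ 2) / (2 * 1), by norm_num, ?_⟩
    simp only [oddBoundState_logDeriv]
    exact (((hT.pow 2).const_mul 3).const_sub 1).div (hT.const_mul 2) (by norm_num)

-- The positive solution of the partner equation is `u = tanh²(x/2)`.
theorem isPartnerLogDeriv_oddBoundState :
    IsPartnerLogDeriv (fun x => 3 * sech (x / 2) ^ 2) 1 oddBoundState oddBoundStateDeriv
      fun x => (1 - halfTanh x ^ 2) / halfTanh x where
  hasDerivAt x hx := by
    have hT := hasDerivAt_halfTanh x
    have hpos := halfTanh_pos hx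
    refine (((hT.fun_pow 2).const_sub 1).fun_div hT hpos.ne').congr_deriv ?_
    rw [oddBoundState_logDeriv, sech_half_sq]
    field_simp
    push_cast
    ring
  exists_tendsto_zero := by
    have hT := (tendsto_halfTanh_nhdsGT_zero.pow 2).const_sub 1
    refine ⟨_, (hT.pow 2).congr' ?_⟩
    filter_upwards [self_mem_nhdsWithin] with x hx
    have := (halfTanh_pos hx).ne'
    rw [oddBoundState]
    field_simp
  exists_tendsto_atTop :=
    ⟨_, ((tendsto_halfTanh_atTop.pow 2).const_sub 1).div tendsto_halfTanh_atTop one_ne_zero⟩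

lemma integral_oddBoundState_sq : ∫ x in Ioi 0, oddBoundState x ^ 2 = 4 / 15 := by
  have hderiv (x : ℝ) : HasDerivAt (fun x => 2 * (halfTanh x ^ 3 / 3 - halfTanh x ^ 5 / 5))
      (oddBoundState x ^ 2) x := by
    have hT := hasDerivAt_halfTanh x
    refine ((((hT.fun_pow 3).div_const 3).fun_sub
      ((hT.fun_pow 5).div_const 5)).const_mul 2).congr_deriv ?_
    rw [oddBoundState]
    push_cast
    ring
  have hlim := (((tendsto_halfTanh_atTop.pow 3).div_const 3).sub
    ((tendsto_halfTanh_atTop.pow 5).div_const 5)).const_mul 2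
  rw [integral_Ioi_of_hasDerivAt_of_nonneg' (fun x _ => hderiv x) (fun _ _ => sq_nonneg _) hlim,
    halfTanh_zero]
  norm_num

lemma memLp_top_sech_potential :
    MemLp (fun x => 3 * sech (x / 2) ^ 2) ⊤ (volume.restrict (Ioi 0)) := by
  simp only [sech_half_sq]
  have hcont := continuous_halfTanh
  refine memLp_top_of_bound (by fun_prop) 3 (.of_forall fun x => ?_)
  have h := one_sub_halfTanh_sq_pos x
  rw [Real.norm_of_nonneg (by positivity)]
  linarith [sq_nonneg (halfTanh x)]

theorem halfLine_sech_form_nonneg {w w' : ℝ → ℝ} (hw : DirichletFormDomain w w') :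
    0 ≤ (∫ x in Ioi 0, w' x ^ 2) - 3 * (∫ x in Ioi 0, sech (x / 2) ^ 2 * w x ^ 2)
      + 15 / 4 * (∫ x in Ioi 0, oddBoundState x * w x) ^ 2 := by
  have h := isDirichletGroundState_oddBoundState.schrodingerForm_add_sq_nonneg
    isPartnerLogDeriv_oddBoundState zero_le_one memLp_top_sech_potential hw
  rw [schrodingerForm, integral_sub hw.memLp_deriv.integrable_sq
    (hw.integrableOn_potential_mul_sq memLp_top_sech_potential), integral_oddBoundState_sq] at h
  simp only [mul_assoc, integral_const_mul] at h
  linarith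

end OddBoundState

theorem odd_quadratic_form_nonneg
    (w : ℝ → ℝ) (hodd : ∀ x : ℝ, w (-x) = -w x)
    (hdiff : Differentiable ℝ w)
    (hw2 : Integrable (fun x => (w x) ^ 2))
    (hw'2 : Integrable (fun x => (deriv w x) ^ 2)) :
    (∫ x : ℝ, (deriv w x) ^ 2) - 3 * (∫ x : ℝ, sech (x / 2) ^ 2 * (w x) ^ 2)
      + (∫ x : ℝ, Ytilde x * w x) ^ 2 ≥ 0 := by
  have hw : DirichletFormDomain w (deriv w) :=
    { hasDerivAt := fun x => (hdiff x).hasDerivAt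
      map_zero := Function.Odd.map_zero hodd
      memLp := (memLp_two_iff_integrable_sq hdiff.continuous.aestronglyMeasurable).2
        hw2.integrableOn
      memLp_deriv := (memLp_two_iff_integrable_sq
        (measurable_deriv w).aestronglyMeasurable).2 hw'2.integrableOn }
  have heven_deriv : Function.Even fun x => deriv w x ^ 2 := fun x => by
    simp only [even_deriv_of_odd hodd x]
  have heven_potential : Function.Even fun x => sech (x / 2) ^ 2 * w x ^ 2 := fun x => by
    simp only [hodd, sech, neg_div, Real.cosh_neg, neg_sq]
  have heven_overlap : Function.Even fun x => Ytilde x * w x := fun x => by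
    simp only [hodd, Ytilde, neg_div, Real.cosh_neg, Real.sinh_neg, mul_neg, neg_mul, neg_neg]
  rw [integral_eq_two_mul_integral_Ioi_of_even heven_deriv,
    integral_eq_two_mul_integral_Ioi_of_even heven_potential,
    integral_eq_two_mul_integral_Ioi_of_even heven_overlap]
  simp only [Ytilde_eq, mul_assoc, integral_const_mul, mul_pow]
  rw [Real.sq_sqrt (by norm_num)]
  linarith [halfLine_sech_form_nonneg hw]
end
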